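/- arXiv:1603.07456 — 2 statements merged into one kernel-verified Lean document; each statement's English description precedes it below -/
import Mathlib

section
/- Let θ > 0, λ = 2θ, t > 0, and let f : [0,∞) → ℝ be bounded and measurable. Then 2·∫_0^∞ g_t(y)·f(y) dy + (1/θ)·g_t(0)·f(0) = 2·∫_0^∞ p_t(0,y)·G_f(y) dy. (This is the identity P_t f(0) = P_t⁺ G_f(0), where P_t⁺ is the semigroup of reflected Brownian motion whose transition density from 0 is 2·p_t(0,y) on [0,∞); it expresses, in distributional form, Warren's theorem that the conditional law of the sticky Brownian motion X_t started from 0 given the driving Brownian motion W is K_{0,t}(0,·) with ∫ f dK_{0,t}(0,·) = G_f(W_t − min_{0≤u≤t} W_u).) -/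
open MeasureTheory Real Filter Set

/-- `G lam f y = f 0 · e^{-lam y} + lam · e^{-lam y} · ∫_0^y f(u) e^{lam u} du`. -/
noncomputable def G (lam : ℝ) (f : ℝ → ℝ) (y : ℝ) : ℝ :=
  f 0 * Real.exp (-lam * y) +
    lam * Real.exp (-lam * y) * ∫ u in (0:ℝ)..y, f u * Real.exp (lam * u)

/-- Complementary error function `erfc(x) = (2/√π)·∫_x^∞ e^{−y²} dy`. -/
noncomputable def erfc (x : ℝ) : ℝ :=
  (2 / Real.sqrt Real.pi) * ∫ y in Set.Ioi x, Real.exp (-y ^ 2)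

/-- `g_t(x) = θ·exp(2θx + 2θ²t)·erfc(x/√(2t) + θ·√(2t))`. -/
noncomputable def gfun (θ t x : ℝ) : ℝ :=
  θ * Real.exp (2 * θ * x + 2 * θ ^ 2 * t) *
    erfc (x / Real.sqrt (2 * t) + θ * Real.sqrt (2 * t))

/-- The Gaussian kernel `p_t(x,y) = (2πt)^{−1/2}·exp(−(y−x)²/(2t))`. -/
noncomputable def pker (t x y : ℝ) : ℝ :=
  (Real.sqrt (2 * Real.pi * t))⁻¹ * Real.exp (-(y - x) ^ 2 / (2 * t))

/-!
Multiplying the heat kernel by an exponential `exp (c * y)` only shifts its centre by `c * t` and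
rescales it. Hence `g_t(x)` is, up to the factor `2θ * exp (2θx + 2θ²t)`, the mass beyond `x` of the
heat kernel `q` centred at `-2θt`, and the same `q` appears when the factor `exp (-2θy)` of `G_f(y)`
is absorbed into `p_t(0, y)`. The boundary terms then both reduce to `f(0)` times the mass of `q` on
`(0, ∞)`, while the integral terms are the two iterated integrals of `q(y) * f(u) * exp (2θu)` over
the triangle `0 < u ≤ y`, equal by Fubini.
-/

section Fubini

variable {α E : Type*} [TopologicalSpace α] [LinearOrder α] [OrderClosedTopology α]
  [MeasurableSpace α] [OpensMeasurableSpace α] [NormedAddCommGroup E] [NormedSpace ℝ E]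
  {μ ν : Measure α} {w : α → ℝ} {h : α → E}

lemma integral_indicator_le_left (y : α) :
    ∫ u, {p : α × α | p.2 ≤ p.1}.indicator (fun p ↦ w p.1 • h p.2) (y, u) ∂ν =
      w y • ∫ u in Iic y, h u ∂ν := by
  rw [← integral_smul, ← integral_indicator measurableSet_Iic]
  simp [indicator_apply]

lemma integral_indicator_le_right [CompleteSpace E] (u : α) :
    ∫ y, {p : α × α | p.2 ≤ p.1}.indicator (fun p ↦ w p.1 • h p.2) (y, u) ∂μ =
      (∫ y in Ici u, w y ∂μ) • h u := by
  rw [← integral_smul_const, ← integral_indicator measurableSet_Ici]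
  simp [indicator_apply]

variable [SecondCountableTopology α] [SFinite μ] [SFinite ν]

lemma integrable_prod_indicator_le (hw : Integrable w μ) (hh : AEStronglyMeasurable h ν)
    (hwh : Integrable (fun u ↦ (∫ y in Ici u, ‖w y‖ ∂μ) • h u) ν) :
    Integrable ({p : α × α | p.2 ≤ p.1}.indicator fun p ↦ w p.1 • h p.2) (μ.prod ν) := by
  have section_eq (u : α) : (fun y ↦ {p : α × α | p.2 ≤ p.1}.indicator
      (fun p ↦ w p.1 • h p.2) (y, u)) = (Ici u).indicator fun y ↦ w y • h u := by
    ext y; simp [indicator_apply]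
  have meas : AEStronglyMeasurable
      ({p : α × α | p.2 ≤ p.1}.indicator fun p ↦ w p.1 • h p.2) (μ.prod ν) :=
    (hw.aestronglyMeasurable.comp_fst.smul hh.comp_snd).indicator
      (measurableSet_le measurable_snd measurable_fst)
  refine (integrable_prod_iff' meas).mpr ⟨?_, ?_⟩
  · refine ae_of_all _ fun u ↦ ?_
    rw [section_eq]
    exact (hw.smul_const (h u)).indicator measurableSet_Ici
  · refine hwh.norm.congr (ae_of_all _ fun u ↦ ?_)
    have norm_section (y : α) : ‖{p : α × α | p.2 ≤ p.1}.indicator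
        (fun p ↦ w p.1 • h p.2) (y, u)‖ = (Ici u).indicator (fun y ↦ ‖w y‖ * ‖h u‖) y := by
      rw [congrFun (section_eq u) y, norm_indicator_eq_indicator_norm]
      simp only [norm_smul]
    simp only [norm_section]
    rw [integral_indicator measurableSet_Ici, integral_mul_const, norm_smul,
      norm_of_nonneg (integral_nonneg fun _ ↦ norm_nonneg _)]

lemma integrable_smul_setIntegral_Iic (hw : Integrable w μ) (hh : AEStronglyMeasurable h ν)
    (hwh : Integrable (fun u ↦ (∫ y in Ici u, ‖w y‖ ∂μ) • h u) ν) :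
    Integrable (fun y ↦ w y • ∫ u in Iic y, h u ∂ν) μ := by
  simpa only [integral_indicator_le_left] using
    (integrable_prod_indicator_le hw hh hwh).integral_prod_left

lemma integral_smul_setIntegral_Iic [CompleteSpace E]
    (hw : Integrable w μ) (hh : AEStronglyMeasurable h ν)
    (hwh : Integrable (fun u ↦ (∫ y in Ici u, ‖w y‖ ∂μ) • h u) ν) :
    ∫ y, w y • ∫ u in Iic y, h u ∂ν ∂μ = ∫ u, (∫ y in Ici u, w y ∂μ) • h u ∂ν := by
  simpa only [integral_indicator_le_left, integral_indicator_le_right] using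
    integral_integral_swap (f := fun y u ↦ {p : α × α | p.2 ≤ p.1}.indicator
      (fun p ↦ w p.1 • h p.2) (y, u)) (integrable_prod_indicator_le hw hh hwh)

end Fubini

section HalfLine

variable {E : Type*} [NormedAddCommGroup E] [NormedSpace ℝ E] {a x : ℝ}

lemma setIntegral_Iic_restrict_Ioi (h : ℝ → E) (hx : a ≤ x) :
    ∫ u in Iic x, h u ∂volume.restrict (Ioi a) = ∫ u in a..x, h u := by
  rw [Measure.restrict_restrict measurableSet_Iic, inter_comm, Ioi_inter_Iic,
    intervalIntegral.integral_of_le hx]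

lemma setIntegral_Ici_restrict_Ioi (h : ℝ → E) (hx : a < x) :
    ∫ y in Ici x, h y ∂volume.restrict (Ioi a) = ∫ y in Ioi x, h y := by
  rw [Measure.restrict_restrict measurableSet_Ici,
    inter_eq_left.mpr (Ici_subset_Ioi.mpr hx), integral_Ici_eq_integral_Ioi]

lemma setIntegral_Ioi_comp_add_right (h : ℝ → E) (a c : ℝ) :
    ∫ y in Ioi a, h (y + c) = ∫ y in Ioi (a + c), h y := by
  simpa using (measurePreserving_add_right volume c).setIntegral_preimage_emb
    (measurableEmbedding_addRight c) h (Ioi (a + c))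

variable {w : ℝ → ℝ} {h : ℝ → E}

lemma integrable_setIntegral_Ici_smul
    (hwh : IntegrableOn (fun u ↦ (∫ y in Ioi u, w y) • h u) (Ioi a)) :
    Integrable (fun u ↦ (∫ y in Ici u, w y ∂volume.restrict (Ioi a)) • h u)
      (volume.restrict (Ioi a)) :=
  hwh.congr_fun (fun u hu ↦ by simp only [setIntegral_Ici_restrict_Ioi w hu]) measurableSet_Ioi

lemma integrableOn_Ioi_smul_intervalIntegral
    (hw : IntegrableOn w (Ioi a)) (hh : AEStronglyMeasurable h (volume.restrict (Ioi a)))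
    (hwh : IntegrableOn (fun u ↦ (∫ y in Ioi u, ‖w y‖) • h u) (Ioi a)) :
    IntegrableOn (fun y ↦ w y • ∫ u in a..y, h u) (Ioi a) := by
  refine IntegrableOn.congr_fun
    (integrable_smul_setIntegral_Iic hw hh (integrable_setIntegral_Ici_smul hwh))
    (fun y hy ↦ ?_) measurableSet_Ioi
  simp only [setIntegral_Iic_restrict_Ioi h (mem_Ioi.mp hy).le]

lemma integral_Ioi_smul_intervalIntegral [CompleteSpace E]
    (hw : IntegrableOn w (Ioi a)) (hh : AEStronglyMeasurable h (volume.restrict (Ioi a)))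
    (hwh : IntegrableOn (fun u ↦ (∫ y in Ioi u, ‖w y‖) • h u) (Ioi a)) :
    ∫ y in Ioi a, w y • ∫ u in a..y, h u = ∫ u in Ioi a, (∫ y in Ioi u, w y) • h u := by
  calc ∫ y in Ioi a, w y • ∫ u in a..y, h u
      = ∫ y in Ioi a, w y • ∫ u in Iic y, h u ∂volume.restrict (Ioi a) :=
        setIntegral_congr_fun measurableSet_Ioi fun y hy ↦ by
          simp only [setIntegral_Iic_restrict_Ioi h (mem_Ioi.mp hy).le]
    _ = ∫ u in Ioi a, (∫ y in Ici u, w y ∂volume.restrict (Ioi a)) • h u :=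
        integral_smul_setIntegral_Iic hw hh (integrable_setIntegral_Ici_smul hwh)
    _ = ∫ u in Ioi a, (∫ y in Ioi u, w y) • h u :=
        setIntegral_congr_fun measurableSet_Ioi fun u hu ↦ by
          simp only [setIntegral_Ici_restrict_Ioi w hu]

end HalfLine

section Erfc

lemma integrable_exp_neg_sq : Integrable fun y : ℝ ↦ exp (-y ^ 2) := by
  simpa using integrable_exp_neg_mul_sq one_pos

lemma erfc_pos (x : ℝ) : 0 < erfc x := by
  have : NeZero (volume.restrict (Ioi x)) := ⟨by simp⟩
  have integral_pos : 0 < ∫ y in Ioi x, exp (-y ^ 2) :=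
    integral_exp_pos integrable_exp_neg_sq.restrict
  unfold erfc
  positivity

lemma antitone_erfc : Antitone erfc := fun x y hxy ↦ by
  refine mul_le_mul_of_nonneg_left ?_ (by positivity)
  exact setIntegral_mono_set integrable_exp_neg_sq.integrableOn
    (ae_of_all _ fun _ ↦ (exp_pos _).le) (Ioi_subset_Ioi hxy).eventuallyLE

lemma erfc_le_exp_neg_sq {x : ℝ} (hx : 0 ≤ x) : erfc x ≤ exp (-x ^ 2) := by
  have integral_le : ∫ y in Ioi x, exp (-y ^ 2) ≤ exp (-x ^ 2) * (√π / 2) := by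
    calc ∫ y in Ioi x, exp (-y ^ 2)
        = ∫ s in Ioi 0, exp (-(s + x) ^ 2) := by
          rw [setIntegral_Ioi_comp_add_right (fun y ↦ exp (-y ^ 2)), zero_add]
      _ ≤ ∫ s in Ioi 0, exp (-x ^ 2) * exp (-s ^ 2) := by
          refine setIntegral_mono_on (integrable_exp_neg_sq.comp_add_right x).integrableOn
            (integrable_exp_neg_sq.const_mul _).integrableOn measurableSet_Ioi fun s hs ↦ ?_
          rw [← exp_add]
          gcongr
          nlinarith [mul_nonneg hx (mem_Ioi.mp hs).le]
      _ = exp (-x ^ 2) * (√π / 2) := by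
          rw [integral_const_mul]
          simpa using integral_gaussian_Ioi 1
  calc erfc x ≤ 2 / √π * (exp (-x ^ 2) * (√π / 2)) := by unfold erfc; gcongr
    _ = exp (-x ^ 2) := by field_simp

end Erfc

section HeatKernel

variable {t : ℝ}

lemma pker_nonneg (t x y : ℝ) : 0 ≤ pker t x y := by
  unfold pker
  positivity

lemma integrable_pker (ht : 0 ≤ t) (x : ℝ) : Integrable (pker t x) :=
  ProbabilityTheory.integrable_gaussianPDFReal x ⟨t, ht⟩

lemma pker_mul_exp (ht : t ≠ 0) (c x y : ℝ) :
    pker t x y * exp (c * y) = exp (c * x + c ^ 2 * t / 2) * pker t (x + c * t) y := by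
  unfold pker
  rw [mul_assoc, mul_left_comm (exp _), ← exp_add, ← exp_add]
  congr 2
  field_simp
  ring

lemma integral_Ioi_pker (ht : 0 < t) (x u : ℝ) :
    ∫ y in Ioi u, pker t x y = erfc ((u - x) / √(2 * t)) / 2 := by
  have pker_eq (y : ℝ) :
      pker t x y = (√π * √(2 * t))⁻¹ * exp (-((√(2 * t))⁻¹ * (y + -x)) ^ 2) := by
    have sqrt_sq_eq : √(2 * t) ^ 2 = 2 * t := sq_sqrt (by positivity)
    rw [pker, mul_pow, inv_pow, sqrt_sq_eq, ← sqrt_mul pi_pos.le]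
    ring_nf
  simp only [pker_eq]
  rw [integral_const_mul,
    setIntegral_Ioi_comp_add_right (fun y ↦ exp (-((√(2 * t))⁻¹ * y) ^ 2)),
    integral_comp_mul_left_Ioi (fun y ↦ exp (-y ^ 2)) _ (by positivity), erfc, smul_eq_mul,
    inv_inv, ← sub_eq_add_neg, ← div_eq_inv_mul]
  field_simp

end HeatKernel

section StickyKernel

variable {θ t : ℝ}

lemma gfun_eq_integral_pker (ht : 0 < t) (θ x : ℝ) :
    gfun θ t x = 2 * θ * exp ((2 * θ) ^ 2 * t / 2) *
      ((∫ y in Ioi x, pker t (-(2 * θ) * t) y) * exp (2 * θ * x)) := by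
  have arg_eq : (x - -(2 * θ) * t) / √(2 * t) = x / √(2 * t) + θ * √(2 * t) := by
    field_simp
    rw [sq_sqrt (by positivity)]
    ring
  rw [integral_Ioi_pker ht, arg_eq, gfun, exp_add]
  ring_nf

lemma gfun_ne_zero (hθ : θ ≠ 0) (t x : ℝ) : gfun θ t x ≠ 0 :=
  mul_ne_zero (mul_ne_zero hθ (exp_ne_zero _)) (erfc_pos _).ne'

lemma measurable_gfun (θ t : ℝ) : Measurable (gfun θ t) := by
  have := antitone_erfc.measurable
  unfold gfun
  fun_prop

lemma gfun_le_exp_neg_sq (hθ : 0 ≤ θ) (ht : 0 < t) {x : ℝ} (hx : 0 ≤ x) :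
    gfun θ t x ≤ θ * exp (-(2 * t)⁻¹ * x ^ 2) := by
  have sq_eq : (x / √(2 * t) + θ * √(2 * t)) ^ 2 =
      (2 * t)⁻¹ * x ^ 2 + (2 * θ * x + 2 * θ ^ 2 * t) := by
    have sqrt_sq_eq : √(2 * t) ^ 2 = 2 * t := sq_sqrt (by positivity)
    rw [add_sq, div_pow, mul_pow, sqrt_sq_eq]
    field_simp
    ring
  calc gfun θ t x
      ≤ θ * exp (2 * θ * x + 2 * θ ^ 2 * t) * exp (-(x / √(2 * t) + θ * √(2 * t)) ^ 2) := by
        unfold gfun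
        gcongr
        exact erfc_le_exp_neg_sq (by positivity)
    _ = θ * exp (-(2 * t)⁻¹ * x ^ 2) := by
        rw [mul_assoc, ← exp_add, sq_eq]
        congr 2
        ring

lemma integrableOn_gfun (hθ : 0 ≤ θ) (ht : 0 < t) : IntegrableOn (gfun θ t) (Ioi 0) := by
  refine Integrable.mono' ((integrable_exp_neg_mul_sq (b := (2 * t)⁻¹)
    (by positivity)).const_mul θ).integrableOn (measurable_gfun θ t).aestronglyMeasurable ?_
  filter_upwards [ae_restrict_mem measurableSet_Ioi] with x hx
  have gfun_nonneg : 0 ≤ gfun θ t x := by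
    have := erfc_pos (x / √(2 * t) + θ * √(2 * t))
    unfold gfun
    positivity
  rw [norm_of_nonneg gfun_nonneg]
  exact gfun_le_exp_neg_sq hθ ht (mem_Ioi.mp hx).le

lemma pker_mul_G (ht : t ≠ 0) (lam : ℝ) (f : ℝ → ℝ) (y : ℝ) :
    pker t 0 y * G lam f y = exp (lam ^ 2 * t / 2) * (f 0 * pker t (-lam * t) y +
      lam * (pker t (-lam * t) y * ∫ u in (0:ℝ)..y, f u * exp (lam * u))) := by
  have tilt := pker_mul_exp ht (-lam) 0 y
  simp only [mul_zero, zero_add, neg_sq] at tilt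
  unfold G
  linear_combination (f 0 + lam * ∫ u in (0:ℝ)..y, f u * exp (lam * u)) * tilt

lemma integral_pker_mul_G (ht : 0 < t) (lam : ℝ) {f : ℝ → ℝ}
    (hfm : AEStronglyMeasurable f (volume.restrict (Ioi 0)))
    (hf : IntegrableOn
      (fun u ↦ (∫ y in Ioi u, pker t (-lam * t) y) * (f u * exp (lam * u))) (Ioi 0)) :
    ∫ y in Ioi 0, pker t 0 y * G lam f y =
      exp (lam ^ 2 * t / 2) * (f 0 * (∫ y in Ioi 0, pker t (-lam * t) y) +
        lam * ∫ u in Ioi 0, (∫ y in Ioi u, pker t (-lam * t) y) * (f u * exp (lam * u))) := by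
  have tilted_int : IntegrableOn (pker t (-lam * t)) (Ioi 0) :=
    (integrable_pker ht.le _).integrableOn
  have weighted_meas : AEStronglyMeasurable (fun u ↦ f u * exp (lam * u))
      (volume.restrict (Ioi 0)) := hfm.mul (by fun_prop)
  have tail_int : IntegrableOn
      (fun u ↦ (∫ y in Ioi u, ‖pker t (-lam * t) y‖) • (f u * exp (lam * u))) (Ioi 0) := by
    simpa only [norm_of_nonneg (pker_nonneg _ _ _), smul_eq_mul] using hf
  have mul_integral_int :=
    integrableOn_Ioi_smul_intervalIntegral tilted_int weighted_meas tail_int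
  have fubini := integral_Ioi_smul_intervalIntegral tilted_int weighted_meas tail_int
  simp only [smul_eq_mul] at mul_integral_int fubini
  simp only [pker_mul_G ht.ne', integral_const_mul]
  rw [integral_add (tilted_int.const_mul _) (mul_integral_int.const_mul _), integral_const_mul,
    integral_const_mul, fubini]

lemma aestronglyMeasurable_of_gfun_mul {μ : Measure ℝ} {f : ℝ → ℝ} (hθ : θ ≠ 0)
    (hf : AEStronglyMeasurable (fun y ↦ gfun θ t y * f y) μ) : AEStronglyMeasurable f μ := by
  refine ((measurable_gfun θ t).inv.aestronglyMeasurable.mul hf).congr (ae_of_all _ fun y ↦ ?_)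
  exact inv_mul_cancel_left₀ (gfun_ne_zero hθ t y) (f y)

end StickyKernel

theorem Pt_at_zero_eq_reflected_of_G_general {θ t : ℝ} (hθ : θ ≠ 0) (ht : 0 < t) {f : ℝ → ℝ}
    (hf : IntegrableOn (fun y ↦ gfun θ t y * f y) (Ioi 0)) :
    2 * (∫ y in Ioi (0:ℝ), gfun θ t y * f y) + (1 / θ) * gfun θ t 0 * f 0
      = 2 * ∫ y in Ioi (0:ℝ), pker t 0 y * G (2 * θ) f y := by
  have gfun_mul (u : ℝ) : gfun θ t u * f u = 2 * θ * exp ((2 * θ) ^ 2 * t / 2) *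
      ((∫ y in Ioi u, pker t (-(2 * θ) * t) y) * (f u * exp (2 * θ * u))) := by
    rw [gfun_eq_integral_pker ht]
    ring
  have f_meas := aestronglyMeasurable_of_gfun_mul hθ hf.aestronglyMeasurable
  simp only [gfun_mul] at hf ⊢
  have tail_int := (integrable_const_mul_iff (IsUnit.mk0 _ (by positivity)) _).mp hf
  rw [integral_pker_mul_G ht _ f_meas tail_int, integral_const_mul, gfun_eq_integral_pker ht]
  simp only [mul_zero, exp_zero, mul_one]
  field_simp
  ring

/-- The identity `P_t f(0) = P_t⁺ G_f(0)`, a distributional form of Warren's theorem: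
`2∫_0^∞ g_t(y) f(y) dy + (1/θ) g_t(0) f(0) = 2∫_0^∞ p_t(0,y) G_f(y) dy`. -/
theorem Pt_at_zero_eq_reflected_of_G (θ lam t : ℝ) (hθ : 0 < θ) (hlam : lam = 2 * θ)
    (ht : 0 < t) (f : ℝ → ℝ) (hfm : Measurable f) (C : ℝ) (hfb : ∀ x, 0 ≤ x → |f x| ≤ C) :
    2 * (∫ y in Set.Ioi (0:ℝ), gfun θ t y * f y) + (1 / θ) * gfun θ t 0 * f 0
      = 2 * ∫ y in Set.Ioi (0:ℝ), pker t 0 y * G lam f y := by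
  subst hlam
  exact Pt_at_zero_eq_reflected_of_G_general hθ.ne' ht <|
    (integrableOn_gfun hθ.le ht).mul_bdd (c := C) hfm.aestronglyMeasurable <|
      (ae_restrict_mem measurableSet_Ioi).mono fun x hx ↦ hfb x (mem_Ioi.mp hx).le
end

section
/- Let θ > 0 and f ∈ 𝒮. Then for every t > 0 the map t ↦ P_t f(x) is differentiable, and: (i) for every x > 0, ∂_t (P_t f)(x) = (1/2)·(P_t f)''(x); (ii) at x = 0, ∂_t (P_t f)(0) = θ·(P_t f)'(0⁺). (That is, u(t,x) = P_t f(x) satisfies the Kolmogorov backward equation ∂_t u = 𝒜 u for the sticky Brownian motion generator 𝒜, where 𝒜h(x) = (1/2)h''(x) for x > 0 and 𝒜h(0) = θ·h'(0⁺).) -/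
open MeasureTheory Real Filter Set

/-- The sticky Brownian motion semigroup:
`P_t f(x) = ∫_0^∞ (p_t(x,y) − p_t(x,−y) + 2 g_t(x+y)) f(y) dy + (1/θ) g_t(x) f(0)`. -/
noncomputable def Pt (θ t : ℝ) (f : ℝ → ℝ) (x : ℝ) : ℝ :=
  (∫ y in Set.Ioi (0:ℝ), (pker t x y - pker t x (-y) + 2 * gfun θ t (x + y)) * f y)
    + (1 / θ) * gfun θ t x * f 0

/-- `f ∈ 𝒮`: `f` is C² on `(0,∞)`, the one-sided limits `f(0⁺)`, `f'(0⁺)`, `f''(0⁺)` exist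
and are finite, and `lim_{x→∞} f(x) = 0`. -/
def memS (f : ℝ → ℝ) : Prop :=
  ContDiffOn ℝ 2 f (Set.Ioi 0) ∧
  (∃ a : ℝ, Filter.Tendsto f (nhdsWithin 0 (Set.Ioi 0)) (nhds a)) ∧
  (∃ b : ℝ, Filter.Tendsto (deriv f) (nhdsWithin 0 (Set.Ioi 0)) (nhds b)) ∧
  (∃ c : ℝ, Filter.Tendsto (deriv (deriv f)) (nhdsWithin 0 (Set.Ioi 0)) (nhds c)) ∧
  Filter.Tendsto f Filter.atTop (nhds 0)

/-!
Completing the square shows that `g_t(x) = ∫₀^∞ p_t(0, x + y) 2θ e^{-2θy} dy`, a superposition of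
translates of the heat kernel. Hence `P_t f` is a combination of superpositions of solutions of the
heat equation, and so a solution itself: the Gaussian decay of the kernel beats any exponential
growth of the weights, which allows differentiation under the integral sign.

At `x = 0`, integrating by parts against the exponential weight gives `∂g = 2θ (g - p)`, where `p`
is the heat kernel. Since the reflected terms cancel in `∂²(P_t f)(0)` and add up in `∂(P_t f)(0)`,
differentiating this identity once turns `½ ∂²(P_t f)(0)` into `θ ∂(P_t f)(0)`; the atom `f(0)`
causes no defect because `∂p_t(0, ·)` vanishes at `0`.
-/

open Topology Asymptotics

/-- The class of data `f` on `(0, ∞)` with an absolutely convergent Laplace integral at `c`. -/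
def LaplaceIntegrable (c : ℝ) (f : ℝ → ℝ) : Prop :=
  IntegrableOn (fun y => exp (-(c * y)) * f y) (Ioi 0)

/-- Exponential decay at rate `c` in the space variable, locally uniformly in the time `t > 0`.
The bound is required on all of `ℝ`, so it allows growth of order `exp (c * |z|)` at `-∞`. -/
def ExpDecay (c : ℝ) (u : ℝ → ℝ → ℝ) : Prop :=
  ∀ ⦃t⦄, 0 < t → (fun p : ℝ × ℝ => u p.1 p.2) =O[𝓝 t ×ˢ ⊤] fun p => exp (-(c * p.2))

/-- The superposition of the translates of a space-time function `u` by `y > 0`, with weights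
`f y`. -/
noncomputable def superpose (u : ℝ → ℝ → ℝ) (f : ℝ → ℝ) (t x : ℝ) : ℝ :=
  ∫ y in Ioi 0, u t (x + y) * f y

/-- `u` solves the heat equation `∂ₜu = ½ ∂ₓ²u` on `(0, ∞) × ℝ`, with `u₁ = ∂ₓu` and
`u₂ = ∂ₓ²u`. -/
structure IsHeatSolution (u u₁ u₂ : ℝ → ℝ → ℝ) : Prop where
  hasDerivAt_space : ∀ ⦃t⦄, 0 < t → ∀ x, HasDerivAt (u t) (u₁ t x) x
  hasDerivAt_space₁ : ∀ ⦃t⦄, 0 < t → ∀ x, HasDerivAt (u₁ t) (u₂ t x) x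
  hasDerivAt_time : ∀ ⦃t⦄, 0 < t → ∀ x, HasDerivAt (fun s => u s x) (1 / 2 * u₂ t x) t

/-- A solution of the heat equation that decays exponentially at rate `c` together with its space
derivatives, so that it can be superposed with weights `f` satisfying `LaplaceIntegrable c f`. -/
structure IsDecayingHeatSolution (c : ℝ) (u u₁ u₂ : ℝ → ℝ → ℝ) : Prop
    extends IsHeatSolution u u₁ u₂ where
  expDecay : ExpDecay c u
  expDecay₁ : ExpDecay c u₁
  expDecay₂ : ExpDecay c u₂

/-- The centred Gaussian density `p_t(0, z)` of variance `t`. -/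
noncomputable def heatKernel (t z : ℝ) : ℝ :=
  (√(2 * π * t))⁻¹ * exp (-z ^ 2 / (2 * t))

/-- The space derivative of `heatKernel`. -/
noncomputable def heatKernelDeriv (t z : ℝ) : ℝ :=
  -(z / t) * heatKernel t z

/-- The second space derivative of `heatKernel`. -/
noncomputable def heatKernelDeriv₂ (t z : ℝ) : ℝ :=
  (z ^ 2 / t ^ 2 - 1 / t) * heatKernel t z

/-- The function `y ↦ a e^{-a y}`: for `a > 0`, the density of the exponential distribution. -/
noncomputable def expWeight (a y : ℝ) : ℝ :=
  a * exp (-(a * y))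

lemma measurable_of_forall_hasDerivAt {f f' : ℝ → ℝ} (h : ∀ x, HasDerivAt f (f' x) x) :
    Measurable f' := by
  rw [← funext fun x => (h x).deriv]
  exact measurable_deriv f

namespace LaplaceIntegrable

variable {c d : ℝ} {f : ℝ → ℝ}

lemma aestronglyMeasurable (hf : LaplaceIntegrable c f) :
    AEStronglyMeasurable f (volume.restrict (Ioi 0)) := by
  have hexp : Continuous fun y => exp (c * y) := by fun_prop
  refine (hexp.aestronglyMeasurable.mul (Integrable.aestronglyMeasurable hf)).congr
    (Eventually.of_forall fun y => ?_)
  simp only [Pi.mul_apply, ← mul_assoc, ← exp_add, add_neg_cancel, exp_zero, one_mul]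

lemma mono (hf : LaplaceIntegrable c f) (hcd : c ≤ d) : LaplaceIntegrable d f := by
  have hexp : Continuous fun y => exp ((c - d) * y) := by fun_prop
  have hbound : ∀ᵐ y ∂volume.restrict (Ioi 0), ‖exp ((c - d) * y)‖ ≤ 1 := by
    filter_upwards [ae_restrict_mem measurableSet_Ioi] with y hy
    rw [norm_of_nonneg (exp_pos _).le]
    exact exp_le_one_iff.2 (mul_nonpos_of_nonpos_of_nonneg (sub_nonpos.2 hcd) hy.le)
  refine (hf.bdd_mul hexp.aestronglyMeasurable hbound).congr (Eventually.of_forall fun y => ?_)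
  simp only [← mul_assoc, ← exp_add]
  ring_nf

lemma of_tendsto (hf : ContinuousOn f (Ioi 0)) {a b : ℝ} (ha : Tendsto f (𝓝[>] 0) (𝓝 a))
    (hb : Tendsto f atTop (𝓝 b)) (hc : 0 < c) : LaplaceIntegrable c f := by
  have hcont : ContinuousOn (fun y => exp (-(c * y)) * f y) (Ioi 0) := by fun_prop
  have hexp : IntegrableOn (fun y => exp (-(c * y))) (Ioi 0) := by
    simpa only [neg_mul] using integrableOn_exp_mul_Ioi (neg_lt_zero.2 hc) 0
  have hmeas : AEStronglyMeasurable (fun y => exp (-(c * y)) * f y) (volume.restrict (Ioi 0)) :=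
    hcont.aestronglyMeasurable measurableSet_Ioi
  have htop : (fun y => exp (-(c * y)) * f y) =O[atTop] fun y => exp (-(c * y)) := by
    simpa only [mul_one] using (isBigO_refl _ _).mul (hb.isBigO_one ℝ)
  have hzero : Tendsto (fun y => exp (-(c * y)) * f y) (𝓝[>] 0) (𝓝 (exp (-(c * 0)) * a)) :=
    ((by fun_prop : Continuous fun y => exp (-(c * y))).tendsto' 0 _ rfl
      |>.mono_left nhdsWithin_le_nhds).mul ha
  exact integrableOn_Ioi_iff_integrableAtFilter_atTop_nhdsWithin.2
    ⟨htop.integrableAtFilter ⟨Ioi 0, Ioi_mem_atTop 0, hmeas⟩ ⟨Ioi 0, Ioi_mem_atTop 0, hexp⟩,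
      hzero.integrableAtFilter ⟨Ioi 0, self_mem_nhdsWithin, hmeas⟩
        (volume.finiteAt_nhdsWithin 0 (Ioi 0)),
      hcont.locallyIntegrableOn measurableSet_Ioi⟩

end LaplaceIntegrable

lemma laplaceIntegrable_expWeight {a c : ℝ} (h : 0 < c + a) :
    LaplaceIntegrable c (expWeight a) := by
  have hint := (integrableOn_exp_mul_Ioi (neg_lt_zero.2 h) 0).const_mul a
  refine hint.congr (Eventually.of_forall fun y => ?_)
  simp only [expWeight, mul_left_comm _ a, ← exp_add]
  ring_nf

lemma memS.laplaceIntegrable {f : ℝ → ℝ} (hf : memS f) {c : ℝ} (hc : 0 < c) :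
    LaplaceIntegrable c f := by
  obtain ⟨hsmooth, ⟨_, hzero⟩, -, -, htop⟩ := hf
  exact .of_tendsto hsmooth.continuousOn hzero htop hc

namespace ExpDecay

variable {c t : ℝ} {u v : ℝ → ℝ → ℝ}

lemma sub (hu : ExpDecay c u) (hv : ExpDecay c v) : ExpDecay c fun t z => u t z - v t z :=
  fun _ ht => (hu ht).sub (hv ht)

lemma coeff_mul {a : ℝ → ℝ} (ha : ∀ t, 0 < t → ContinuousAt a t) (hu : ExpDecay c u) :
    ExpDecay c fun t z => a t * u t z := fun t ht => by
  simpa only [one_mul, Function.comp_apply] using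
    (((ha t ht).tendsto.isBigO_one ℝ).comp_tendsto tendsto_fst).mul (hu ht)

lemma of_abs_le (hv : ExpDecay c v) (h : ∀ ⦃t⦄, 0 < t → ∀ z, |u t z| ≤ v t z) :
    ExpDecay c u := fun t ht => by
  refine IsBigO.trans (.of_bound 1 ?_) (hv ht)
  filter_upwards [tendsto_fst.eventually (lt_mem_nhds ht)] with p hp
  rw [one_mul]
  exact (h hp p.2).trans (le_abs_self _)

-- `|z| ≤ e^z + e^{-z}` trades one power of `z` for a shift of the rate by `±1`.
lemma id_mul (hneg : ExpDecay (c - 1) u) (hpos : ExpDecay (c + 1) u) :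
    ExpDecay c fun t z => z * u t z := fun t ht => by
  have hsplit : (fun p : ℝ × ℝ => p.2 * u p.1 p.2) =O[𝓝 t ×ˢ ⊤]
      fun p => exp p.2 * ‖u p.1 p.2‖ + exp (-p.2) * ‖u p.1 p.2‖ := by
    refine .of_bound 1 (Eventually.of_forall fun p => ?_)
    have hz : |p.2| ≤ exp p.2 + exp (-p.2) := by
      rcases abs_cases p.2 with ⟨h, -⟩ | ⟨h, -⟩ <;>
        linarith [add_one_le_exp p.2, add_one_le_exp (-p.2), exp_pos p.2, exp_pos (-p.2)]
    rw [one_mul, ← add_mul, norm_mul, norm_of_nonneg (by positivity : (0 : ℝ) ≤ _ * _)]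
    exact mul_le_mul_of_nonneg_right hz (norm_nonneg _)
  refine hsplit.trans (.add ?_ ?_)
  · refine ((isBigO_refl _ _).mul (hpos ht).norm_left).congr_right fun p => ?_
    rw [← exp_add]
    ring_nf
  · refine ((isBigO_refl _ _).mul (hneg ht).norm_left).congr_right fun p => ?_
    rw [← exp_add]
    ring_nf

lemma exists_eventually_abs_le (hu : ExpDecay c u) (ht : 0 < t) :
    ∃ C, 0 ≤ C ∧ ∀ᶠ s in 𝓝 t, ∀ z, |u s z| ≤ C * exp (-(c * z)) := by
  obtain ⟨C, hC, hbound⟩ := (hu ht).exists_nonneg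
  rw [IsBigOWith, ← principal_univ, eventually_prod_principal_iff] at hbound
  refine ⟨C, hC, hbound.mono fun s hs z => ?_⟩
  simpa only [norm_eq_abs, abs_exp] using hs z (mem_univ z)

lemma exists_abs_le (hu : ExpDecay c u) (ht : 0 < t) :
    ∃ C, 0 ≤ C ∧ ∀ z, |u t z| ≤ C * exp (-(c * z)) := by
  obtain ⟨C, hC, hbound⟩ := hu.exists_eventually_abs_le ht
  exact ⟨C, hC, hbound.self_of_nhds⟩

end ExpDecay

section Superposition

variable {c t : ℝ} {u v u' : ℝ → ℝ → ℝ} {f : ℝ → ℝ}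

lemma norm_translate_mul_le {C : ℝ} {φ : ℝ → ℝ} (hφ : ∀ z, |φ z| ≤ C * exp (-(c * z)))
    (x y w : ℝ) : ‖φ (x + y) * w‖ ≤ C * exp (-(c * x)) * ‖exp (-(c * y)) * w‖ := by
  calc ‖φ (x + y) * w‖ ≤ C * exp (-(c * (x + y))) * ‖w‖ := by
        rw [norm_mul]
        exact mul_le_mul_of_nonneg_right (hφ _) (norm_nonneg w)
    _ = C * exp (-(c * x)) * ‖exp (-(c * y)) * w‖ := by
        rw [norm_mul, norm_of_nonneg (exp_pos _).le, mul_add, neg_add, exp_add]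
        ring

lemma LaplaceIntegrable.aestronglyMeasurable_translate_mul (hf : LaplaceIntegrable c f)
    {φ : ℝ → ℝ} (hφ : Measurable φ) (x : ℝ) :
    AEStronglyMeasurable (fun y => φ (x + y) * f y) (volume.restrict (Ioi 0)) :=
  (hφ.comp (measurable_const_add x)).aestronglyMeasurable.mul hf.aestronglyMeasurable

lemma ExpDecay.integrableOn_translate_mul (hu : ExpDecay c u) (hmeas : Measurable (u t))
    (hf : LaplaceIntegrable c f) (ht : 0 < t) (x : ℝ) :
    IntegrableOn (fun y => u t (x + y) * f y) (Ioi 0) := by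
  obtain ⟨C, -, hC⟩ := hu.exists_abs_le ht
  exact (hf.norm.const_mul (C * exp (-(c * x)))).mono'
    (hf.aestronglyMeasurable_translate_mul hmeas x)
    (Eventually.of_forall fun y => norm_translate_mul_le hC x y (f y))

lemma ExpDecay.superpose (hu : ExpDecay c u) (hf : LaplaceIntegrable c f) :
    ExpDecay c (superpose u f) := fun t ht => by
  obtain ⟨C, -, hC⟩ := hu.exists_eventually_abs_le ht
  refine .of_bound (C * ∫ y in Ioi 0, ‖exp (-(c * y)) * f y‖) ?_
  filter_upwards [tendsto_fst.eventually hC] with p hp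
  calc ‖_root_.superpose u f p.1 p.2‖
      ≤ ∫ y in Ioi 0, C * exp (-(c * p.2)) * ‖exp (-(c * y)) * f y‖ :=
        norm_integral_le_of_norm_le (hf.norm.const_mul _)
          (Eventually.of_forall fun y => norm_translate_mul_le hp p.2 y (f y))
    _ = (C * ∫ y in Ioi 0, ‖exp (-(c * y)) * f y‖) * ‖exp (-(c * p.2))‖ := by
        rw [integral_const_mul, norm_of_nonneg (exp_pos _).le]
        ring

lemma hasDerivAt_superpose_space (hu : ExpDecay c u) (hu' : ExpDecay c u')
    (hf : LaplaceIntegrable c f) (ht : 0 < t) (hderiv : ∀ z, HasDerivAt (u t) (u' t z) z)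
    (x : ℝ) : HasDerivAt (superpose u f t) (superpose u' f t x) x := by
  obtain ⟨C, hC₀, hC⟩ := hu'.exists_abs_le ht
  have hmeas : Measurable (u t) :=
    (continuous_iff_continuousAt.2 fun z => (hderiv z).continuousAt).measurable
  have hbound : ∀ y, ∀ x' ∈ Metric.ball x 1,
      ‖u' t (x' + y) * f y‖ ≤ C * exp (|c| - c * x) * ‖exp (-(c * y)) * f y‖ := by
    intro y x' hx'
    have hdist : |c * (x - x')| ≤ |c| := by
      rw [Metric.mem_ball', dist_eq] at hx'
      simpa only [abs_mul, mul_one] using mul_le_mul_of_nonneg_left hx'.le (abs_nonneg c)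
    have hexp : exp (-(c * x')) ≤ exp (|c| - c * x) :=
      exp_le_exp.2 (by linarith [le_abs_self (c * (x - x'))])
    exact (norm_translate_mul_le hC x' y (f y)).trans (by gcongr)
  exact (hasDerivAt_integral_of_dominated_loc_of_deriv_le
    (F := fun x y => u t (x + y) * f y) (F' := fun x y => u' t (x + y) * f y)
    (Metric.ball_mem_nhds x one_pos)
    (Eventually.of_forall (hf.aestronglyMeasurable_translate_mul hmeas))
    (hu.integrableOn_translate_mul hmeas hf ht x)
    (hf.aestronglyMeasurable_translate_mul (measurable_of_forall_hasDerivAt hderiv) x)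
    (Eventually.of_forall hbound) (hf.norm.const_mul _)
    (Eventually.of_forall fun y x' _ => ((hderiv (x' + y)).comp_add_const x' y).mul_const (f y))).2

lemma hasDerivAt_superpose_time (hu : ExpDecay c u) (hu' : ExpDecay c u')
    (hmeas : ∀ ⦃s⦄, 0 < s → Measurable (u s)) (hmeas' : Measurable (u' t))
    (hf : LaplaceIntegrable c f) (ht : 0 < t)
    (hderiv : ∀ ⦃s⦄, 0 < s → ∀ z, HasDerivAt (fun s => u s z) (u' s z) s) (x : ℝ) :
    HasDerivAt (fun s => superpose u f s x) (superpose u' f t x) t := by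
  obtain ⟨C, -, hC⟩ := hu'.exists_eventually_abs_le ht
  exact (hasDerivAt_integral_of_dominated_loc_of_deriv_le
    (F := fun s y => u s (x + y) * f y) (F' := fun s y => u' s (x + y) * f y)
    (s := {s | (∀ z, |u' s z| ≤ C * exp (-(c * z))) ∧ 0 < s}) (hC.and (lt_mem_nhds ht))
    ((lt_mem_nhds ht).mono fun s hs => hf.aestronglyMeasurable_translate_mul (hmeas hs) x)
    (hu.integrableOn_translate_mul (hmeas ht) hf ht x)
    (hf.aestronglyMeasurable_translate_mul hmeas' x)
    (Eventually.of_forall fun y s hs => norm_translate_mul_le hs.1 x y (f y))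
    (hf.norm.const_mul _)
    (Eventually.of_forall fun y s hs => (hderiv hs.2 (x + y)).mul_const (f y))).2

lemma superpose_const_mul (a : ℝ) (u : ℝ → ℝ → ℝ) (f : ℝ → ℝ) (t x : ℝ) :
    superpose (fun s z => a * u s z) f t x = a * superpose u f t x := by
  simp only [superpose, mul_assoc, integral_const_mul]

lemma superpose_sub (hu : ExpDecay c u) (hv : ExpDecay c v) (hmu : Measurable (u t))
    (hmv : Measurable (v t)) (hf : LaplaceIntegrable c f) (ht : 0 < t) (x : ℝ) :
    superpose (fun s z => u s z - v s z) f t x = superpose u f t x - superpose v f t x := by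
  simp only [superpose, sub_mul]
  exact integral_sub (hu.integrableOn_translate_mul hmu hf ht x)
    (hv.integrableOn_translate_mul hmv hf ht x)

lemma superpose_congr (h : ∀ z, u t z = v t z) (f : ℝ → ℝ) (x : ℝ) :
    superpose u f t x = superpose v f t x := by
  simp only [superpose, h]

lemma superpose_deriv_expWeight {a : ℝ} (hu : ExpDecay c u) (hu' : ExpDecay c u')
    (hac : 0 < c + a) (ht : 0 < t) (hderiv : ∀ z, HasDerivAt (u t) (u' t z) z) (x : ℝ) :
    superpose u' (expWeight a) t x = a * (superpose u (expWeight a) t x - u t x) := by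
  have hweight := laplaceIntegrable_expWeight hac
  have hcont : Continuous (u t) := continuous_iff_continuousAt.2 fun z => (hderiv z).continuousAt
  have hint := hu.integrableOn_translate_mul hcont.measurable hweight ht x
  have hint' := hu'.integrableOn_translate_mul
    (measurable_of_forall_hasDerivAt hderiv) hweight ht x
  have hprod : ∀ y, HasDerivAt (fun y => u t (x + y) * expWeight a y)
      (u' t (x + y) * expWeight a y - a * (u t (x + y) * expWeight a y)) y := fun y => by
    have hexp : HasDerivAt (expWeight a) (-(a * expWeight a y)) y := by
      refine (((hasDerivAt_id y).const_mul a).neg.exp.const_mul a).congr_deriv ?_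
      simp only [expWeight, Pi.neg_apply, id]
      ring
    exact (((hderiv (x + y)).comp_const_add x y).mul hexp).congr_deriv (by ring)
  have hint_prod := hint'.sub (hint.const_mul a)
  have hfund := integral_Ioi_of_hasDerivAt_of_tendsto' (a := 0) (fun y _ => hprod y) hint_prod
    (tendsto_zero_of_hasDerivAt_of_integrableOn_Ioi (fun y _ => hprod y) hint_prod hint)
  rw [integral_sub hint' (hint.const_mul a), integral_const_mul] at hfund
  simp only [expWeight, add_zero, mul_zero, neg_zero, exp_zero, mul_one] at hfund
  simp only [superpose, expWeight]
  linarith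

end Superposition

namespace IsHeatSolution

variable {u u₁ u₂ v v₁ v₂ : ℝ → ℝ → ℝ}

lemma add (hu : IsHeatSolution u u₁ u₂) (hv : IsHeatSolution v v₁ v₂) :
    IsHeatSolution (fun t x => u t x + v t x) (fun t x => u₁ t x + v₁ t x)
      (fun t x => u₂ t x + v₂ t x) where
  hasDerivAt_space _ ht x := (hu.hasDerivAt_space ht x).add (hv.hasDerivAt_space ht x)
  hasDerivAt_space₁ _ ht x := (hu.hasDerivAt_space₁ ht x).add (hv.hasDerivAt_space₁ ht x)
  hasDerivAt_time _ ht x :=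
    ((hu.hasDerivAt_time ht x).add (hv.hasDerivAt_time ht x)).congr_deriv (by ring)

lemma const_mul (a : ℝ) (hu : IsHeatSolution u u₁ u₂) :
    IsHeatSolution (fun t x => a * u t x) (fun t x => a * u₁ t x) (fun t x => a * u₂ t x) where
  hasDerivAt_space _ ht x := (hu.hasDerivAt_space ht x).const_mul a
  hasDerivAt_space₁ _ ht x := (hu.hasDerivAt_space₁ ht x).const_mul a
  hasDerivAt_time _ ht x := ((hu.hasDerivAt_time ht x).const_mul a).congr_deriv (by ring)

lemma reflect (hu : IsHeatSolution u u₁ u₂) :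
    IsHeatSolution (fun t x => u t (-x)) (fun t x => -u₁ t (-x)) (fun t x => u₂ t (-x)) where
  hasDerivAt_space t ht x :=
    ((hu.hasDerivAt_space ht (-x)).comp x (hasDerivAt_neg x)).congr_deriv (by ring)
  hasDerivAt_space₁ t ht x :=
    ((hu.hasDerivAt_space₁ ht (-x)).comp x (hasDerivAt_neg x)).neg.congr_deriv (by ring)
  hasDerivAt_time t ht x := hu.hasDerivAt_time ht (-x)

lemma congr (hu : IsHeatSolution u u₁ u₂) (h : ∀ ⦃t⦄, 0 < t → ∀ x, v t x = u t x) :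
    IsHeatSolution v u₁ u₂ where
  hasDerivAt_space t ht x := by
    rw [funext (h ht)]
    exact hu.hasDerivAt_space ht x
  hasDerivAt_space₁ := hu.hasDerivAt_space₁
  hasDerivAt_time t ht x := (hu.hasDerivAt_time ht x).congr_of_eventuallyEq
    ((lt_mem_nhds ht).mono fun _ hs => h hs x)

lemma continuous (hu : IsHeatSolution u u₁ u₂) {t : ℝ} (ht : 0 < t) : Continuous (u t) :=
  continuous_iff_continuousAt.2 fun x => (hu.hasDerivAt_space ht x).continuousAt

lemma measurable₁ (hu : IsHeatSolution u u₁ u₂) {t : ℝ} (ht : 0 < t) : Measurable (u₁ t) :=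
  measurable_of_forall_hasDerivAt (hu.hasDerivAt_space ht)

lemma measurable₂ (hu : IsHeatSolution u u₁ u₂) {t : ℝ} (ht : 0 < t) : Measurable (u₂ t) :=
  measurable_of_forall_hasDerivAt (hu.hasDerivAt_space₁ ht)

lemma deriv_space (hu : IsHeatSolution u u₁ u₂) {t : ℝ} (ht : 0 < t) : deriv (u t) = u₁ t :=
  funext fun x => (hu.hasDerivAt_space ht x).deriv

end IsHeatSolution

lemma IsDecayingHeatSolution.superpose {c : ℝ} {u u₁ u₂ : ℝ → ℝ → ℝ} {f : ℝ → ℝ}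
    (hu : IsDecayingHeatSolution c u u₁ u₂) (hf : LaplaceIntegrable c f) :
    IsDecayingHeatSolution c (superpose u f) (superpose u₁ f) (superpose u₂ f) where
  hasDerivAt_space t ht :=
    hasDerivAt_superpose_space hu.expDecay hu.expDecay₁ hf ht (hu.hasDerivAt_space ht)
  hasDerivAt_space₁ t ht :=
    hasDerivAt_superpose_space hu.expDecay₁ hu.expDecay₂ hf ht (hu.hasDerivAt_space₁ ht)
  hasDerivAt_time t ht x := by
    rw [← superpose_const_mul]
    exact hasDerivAt_superpose_time hu.expDecay
      (hu.expDecay₂.coeff_mul fun _ _ => continuousAt_const)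
      (fun s hs => (hu.continuous hs).measurable) ((hu.measurable₂ ht).const_mul _) hf ht
      hu.hasDerivAt_time x
  expDecay := hu.expDecay.superpose hf
  expDecay₁ := hu.expDecay₁.superpose hf
  expDecay₂ := hu.expDecay₂.superpose hf

section HeatKernel

variable {t : ℝ}

lemma hasDerivAt_heatKernel_space (t z : ℝ) :
    HasDerivAt (heatKernel t) (heatKernelDeriv t z) z := by
  refine ((((hasDerivAt_pow 2 z).neg).div_const (2 * t)).exp.const_mul _).congr_deriv ?_
  simp only [heatKernelDeriv, heatKernel, Pi.neg_apply]
  ring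

lemma hasDerivAt_heatKernelDeriv_space (t z : ℝ) :
    HasDerivAt (heatKernelDeriv t) (heatKernelDeriv₂ t z) z := by
  refine (((hasDerivAt_id z).div_const t).neg.mul
    (hasDerivAt_heatKernel_space t z)).congr_deriv ?_
  simp only [heatKernelDeriv, heatKernelDeriv₂, Pi.neg_apply, id]
  ring

lemma hasDerivAt_heatKernel_time (ht : 0 < t) (z : ℝ) :
    HasDerivAt (fun s => heatKernel s z) (1 / 2 * heatKernelDeriv₂ t z) t := by
  have hpos : 0 < 2 * π * t := by positivity
  have hsqrt : HasDerivAt (fun s => (√(2 * π * s))⁻¹) (-(1 / (2 * t)) * (√(2 * π * t))⁻¹) t := by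
    refine ((((hasDerivAt_id t).const_mul (2 * π)).sqrt hpos.ne').inv
      (sqrt_pos.2 hpos).ne').congr_deriv ?_
    simp only [id, sq_sqrt hpos.le]
    field_simp
  have hexponent : HasDerivAt (fun s => -z ^ 2 / (2 * s)) (z ^ 2 / (2 * t ^ 2)) t := by
    refine ((hasDerivAt_const t (-z ^ 2)).div ((hasDerivAt_id t).const_mul 2)
      (by positivity)).congr_deriv ?_
    simp only [id]
    field_simp
    ring
  refine (hsqrt.mul hexponent.exp).congr_deriv ?_
  simp only [heatKernelDeriv₂, heatKernel]
  field_simp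
  ring

lemma expDecay_heatKernel (c : ℝ) : ExpDecay c heatKernel := by
  have hrefl : ExpDecay c fun _ z => exp (-(c * z)) := fun _ _ => isBigO_refl _ _
  refine (hrefl.coeff_mul (a := fun t => (√(2 * π * t))⁻¹ * exp (c ^ 2 * t / 2))
    fun t ht => ?_).of_abs_le fun t ht z => ?_
  · have hsqrt : √(2 * π * t) ≠ 0 := by positivity
    fun_prop (disch := assumption)
  · have hsquare : -z ^ 2 / (2 * t) = c ^ 2 * t / 2 + -(c * z) - (z - c * t) ^ 2 / (2 * t) := by
      field_simp
      ring
    have hexp : exp (-z ^ 2 / (2 * t)) ≤ exp (c ^ 2 * t / 2 + -(c * z)) :=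
      exp_le_exp.2 (hsquare.trans_le (sub_le_self _ (by positivity)))
    rw [heatKernel, abs_of_nonneg (by positivity), mul_assoc (√(2 * π * t))⁻¹, ← exp_add]
    gcongr

lemma expDecay_heatKernelDeriv (c : ℝ) : ExpDecay c heatKernelDeriv := by
  have hinv : ∀ t : ℝ, 0 < t → ContinuousAt (fun t => -t⁻¹) t := fun t ht =>
    (continuousAt_inv₀ ht.ne').neg
  convert ((expDecay_heatKernel (c - 1)).id_mul (expDecay_heatKernel (c + 1))).coeff_mul hinv
    using 3
  rw [heatKernelDeriv]
  ring

lemma expDecay_heatKernelDeriv₂ (c : ℝ) : ExpDecay c heatKernelDeriv₂ := by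
  have hinv : ∀ t : ℝ, 0 < t → ContinuousAt (fun t => t⁻¹) t := fun t ht =>
    continuousAt_inv₀ ht.ne'
  convert (((expDecay_heatKernelDeriv (c - 1)).id_mul
    (expDecay_heatKernelDeriv (c + 1))).coeff_mul (a := fun t => -t⁻¹)
      fun t ht => (hinv t ht).neg).sub
      ((expDecay_heatKernel c).coeff_mul hinv) using 3
  rw [heatKernelDeriv₂, heatKernelDeriv]
  ring

lemma isDecayingHeatSolution_heatKernel (c : ℝ) :
    IsDecayingHeatSolution c heatKernel heatKernelDeriv heatKernelDeriv₂ where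
  hasDerivAt_space t _ := hasDerivAt_heatKernel_space t
  hasDerivAt_space₁ t _ := hasDerivAt_heatKernelDeriv_space t
  hasDerivAt_time _ ht := hasDerivAt_heatKernel_time ht
  expDecay := expDecay_heatKernel c
  expDecay₁ := expDecay_heatKernelDeriv c
  expDecay₂ := expDecay_heatKernelDeriv₂ c

lemma pker_eq_heatKernel (t x y : ℝ) : pker t x y = heatKernel t (-x + y) := by
  rw [pker, heatKernel, neg_add_eq_sub]

lemma pker_neg_eq_heatKernel (t x y : ℝ) : pker t x (-y) = heatKernel t (x + y) := by
  rw [pker, heatKernel, ← neg_sq (-y - x), neg_sub, sub_neg_eq_add]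

end HeatKernel

section StickyKernel

variable {θ t : ℝ}

lemma erfc_eq_integral_Ioi_zero (w : ℝ) {b : ℝ} (hb : 0 < b) :
    erfc w = 2 / √π * (b * ∫ y in Ioi 0, exp (-(w + b * y) ^ 2)) := by
  have hshift : ∫ y in Ioi 0, exp (-(w + y) ^ 2) = ∫ y in Ioi w, exp (-y ^ 2) := by
    have h := (measurePreserving_add_left volume w).setIntegral_preimage_emb
      (measurableEmbedding_addLeft w) (fun y => exp (-y ^ 2)) (Ioi w)
    rwa [preimage_const_add_Ioi, sub_self] at h
  have hscale := integral_comp_mul_left_Ioi' (fun y => exp (-(w + y) ^ 2)) 0 hb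
  rw [mul_zero, smul_eq_mul, hshift] at hscale
  rw [erfc, hscale]

-- Both sides complete the same square: the Gaussian variable in `erfc` is
-- `(x + y + 2 θ t) / √(2 t)`.
lemma gfun_eq_superpose (θ : ℝ) (ht : 0 < t) (x : ℝ) :
    gfun θ t x = superpose heatKernel (expWeight (2 * θ)) t x := by
  have hsq : √(2 * t) ^ 2 = 2 * t := sq_sqrt (by positivity)
  have hsqrt : √(2 * π * t) = √π * √(2 * t) := by
    rw [← sqrt_mul pi_pos.le]
    ring_nf
  have hexponent (y : ℝ) : 2 * θ * x + 2 * θ ^ 2 * t +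
      -(x / √(2 * t) + θ * √(2 * t) + (√(2 * t))⁻¹ * y) ^ 2 =
      -(x + y) ^ 2 / (2 * t) + -(2 * θ * y) := by
    have hexpand : (x / √(2 * t) + θ * √(2 * t) + (√(2 * t))⁻¹ * y) ^ 2 =
        (x + y + θ * √(2 * t) ^ 2) ^ 2 / √(2 * t) ^ 2 := by
      field_simp
      ring
    rw [hexpand, hsq]
    field_simp
    ring
  rw [gfun, erfc_eq_integral_Ioi_zero _ (by positivity : 0 < (√(2 * t))⁻¹), superpose,
    ← mul_assoc, ← mul_assoc, ← integral_const_mul]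
  congr with y
  calc _ = 2 * θ * (√(2 * π * t))⁻¹ * exp (2 * θ * x + 2 * θ ^ 2 * t +
        -(x / √(2 * t) + θ * √(2 * t) + (√(2 * t))⁻¹ * y) ^ 2) := by
        rw [hsqrt, exp_add (2 * θ * x + 2 * θ ^ 2 * t)]
        ring
    _ = heatKernel t (x + y) * expWeight (2 * θ) y := by
        rw [hexponent, exp_add, heatKernel, expWeight]
        ring

lemma Pt_eq_superpose {c : ℝ} {f : ℝ → ℝ} (hcθ : 0 < c + 2 * θ) (hf : LaplaceIntegrable c f)
    (ht : 0 < t) (x : ℝ) :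
    Pt θ t f x = superpose heatKernel f t (-x) + -1 * superpose heatKernel f t x
      + 2 * superpose (superpose heatKernel (expWeight (2 * θ))) f t x
      + 1 / θ * f 0 * superpose heatKernel (expWeight (2 * θ)) t x := by
  have hφ := isDecayingHeatSolution_heatKernel c
  have hg := hφ.superpose (laplaceIntegrable_expWeight hcθ)
  have hφint := hφ.expDecay.integrableOn_translate_mul (hφ.continuous ht).measurable hf ht
  have hgint := hg.expDecay.integrableOn_translate_mul (hg.continuous ht).measurable hf ht x
  have hφsub : IntegrableOn
      (fun y => heatKernel t (-x + y) * f y - heatKernel t (x + y) * f y) (Ioi 0) :=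
    (hφint (-x)).sub (hφint x)
  have hsplit : ∫ y in Ioi 0, (pker t x y - pker t x (-y) + 2 * gfun θ t (x + y)) * f y =
      superpose heatKernel f t (-x) - superpose heatKernel f t x
        + 2 * superpose (superpose heatKernel (expWeight (2 * θ))) f t x := by
    simp only [pker_neg_eq_heatKernel, gfun_eq_superpose θ ht, add_mul, sub_mul, mul_assoc]
    simp only [pker_eq_heatKernel]
    rw [integral_add hφsub (hgint.const_mul 2),
      integral_sub (hφint (-x)) (hφint x), integral_const_mul]
    rfl
  rw [Pt, hsplit, gfun_eq_superpose θ ht]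
  ring

lemma exists_isHeatSolution_Pt {c : ℝ} {f : ℝ → ℝ} (hθ : θ ≠ 0) (hcθ : 0 < c + 2 * θ)
    (hf : LaplaceIntegrable c f) :
    ∃ u₁ u₂, IsHeatSolution (fun t => Pt θ t f) u₁ u₂ ∧
      ∀ ⦃t⦄, 0 < t → 1 / 2 * u₂ t 0 = θ * u₁ t 0 := by
  have hφ := isDecayingHeatSolution_heatKernel c
  have hg := hφ.superpose (laplaceIntegrable_expWeight hcθ)
  have hφf := (hφ.superpose hf).toIsHeatSolution
  have hgf := (hg.superpose hf).toIsHeatSolution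
  refine ⟨_, _, (((hφf.reflect.add (hφf.const_mul (-1))).add (hgf.const_mul 2)).add
    (hg.const_mul (1 / θ * f 0))).congr fun t ht => Pt_eq_superpose hcθ hf ht, fun t ht => ?_⟩
  have hg₂ : ∀ z, superpose heatKernelDeriv₂ (expWeight (2 * θ)) t z =
      2 * θ * (superpose heatKernelDeriv (expWeight (2 * θ)) t z - heatKernelDeriv t z) :=
    superpose_deriv_expWeight hφ.expDecay₁ hφ.expDecay₂ hcθ ht (hφ.hasDerivAt_space₁ ht)
  have hgf₂ : superpose (superpose heatKernelDeriv₂ (expWeight (2 * θ))) f t 0 =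
      2 * θ * (superpose (superpose heatKernelDeriv (expWeight (2 * θ))) f t 0 -
        superpose heatKernelDeriv f t 0) := by
    rw [← superpose_sub hg.expDecay₁ hφ.expDecay₁ (hg.measurable₁ ht) (hφ.measurable₁ ht) hf ht,
      ← superpose_const_mul]
    exact superpose_congr hg₂ f 0
  have hφ₁ : heatKernelDeriv t 0 = 0 := by simp [heatKernelDeriv]
  rw [hgf₂, hg₂, hφ₁, neg_zero]
  field_simp
  ring

end StickyKernel

theorem Pt_backward_equation_general {θ c : ℝ} (hθ : θ ≠ 0) {f : ℝ → ℝ}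
    (hf : LaplaceIntegrable c f) {t : ℝ} (ht : 0 < t) :
    Differentiable ℝ (Pt θ t f) ∧ Differentiable ℝ (deriv (Pt θ t f)) ∧
      (∀ x, HasDerivAt (fun s => Pt θ s f x) (1 / 2 * deriv (deriv (Pt θ t f)) x) t) ∧
      HasDerivAt (fun s => Pt θ s f 0) (θ * deriv (Pt θ t f) 0) t := by
  obtain ⟨u₁, u₂, hu, hboundary⟩ := exists_isHeatSolution_Pt hθ
    (c := max c (1 - 2 * θ)) (by linarith [le_max_right c (1 - 2 * θ)])
    (hf.mono (le_max_left _ _))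
  rw [hu.deriv_space ht]
  refine ⟨fun x => (hu.hasDerivAt_space ht x).differentiableAt,
    fun x => (hu.hasDerivAt_space₁ ht x).differentiableAt, fun x => ?_, ?_⟩
  · rw [(hu.hasDerivAt_space₁ ht x).deriv]
    exact hu.hasDerivAt_time ht x
  · rw [← hboundary ht]
    exact hu.hasDerivAt_time ht 0

/-- For `f ∈ 𝒮`, the map `t ↦ P_t f(x)` is differentiable for every `t > 0` and `x ≥ 0`, and
`u(t,x) = P_t f(x)` satisfies the Kolmogorov backward equation for the sticky Brownian motion
generator: `∂_t (P_t f)(x) = (1/2)(P_t f)''(x)` for `x > 0`, and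
`∂_t (P_t f)(0) = θ·(P_t f)'(0⁺)`. -/
theorem Pt_backward_equation (θ : ℝ) (hθ : 0 < θ) (f : ℝ → ℝ) (hf : memS f) :
    ∀ t : ℝ, 0 < t →
      (∀ x : ℝ, 0 ≤ x → DifferentiableAt ℝ (fun s : ℝ => Pt θ s f x) t) ∧
      (∀ x : ℝ, 0 < x →
        HasDerivAt (fun s : ℝ => Pt θ s f x) ((1 / 2) * deriv (deriv (Pt θ t f)) x) t) ∧
      (∃ L : ℝ, Filter.Tendsto (deriv (Pt θ t f)) (nhdsWithin 0 (Set.Ioi 0)) (nhds L) ∧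
        HasDerivAt (fun s : ℝ => Pt θ s f 0) (θ * L) t) := by
  intro t ht
  obtain ⟨-, hdiff, hheat, hboundary⟩ :=
    Pt_backward_equation_general hθ.ne' (hf.laplaceIntegrable one_pos) ht
  exact ⟨fun x _ => (hheat x).differentiableAt, fun x _ => hheat x, _,
    hdiff.continuous.continuousAt.tendsto.mono_left nhdsWithin_le_nhds, hboundary⟩
end
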